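/- (Batch peeling is a 1/(k(1+ξ))-approximation.) Let (I, vtx, w) be a weighted k-instance family on a nonempty finite vertex set V and let ξ > 0. Define the chain W_1 = V and W_{i+1} = W_i ∖ L(W_i) for as long as W_i is nonempty. Then the chain reaches the empty set, and for every optimal W* there exists an index i with W_i nonempty and ρ(W_i) ≥ ρ(W*)/(k(1+ξ)). -/

import Mathlib

/-!
Two facts drive the approximation guarantee.

* Handshake identity: `∑ v ∈ W, deg_W v = k * τ(W)`. Hence the average degree in `W` is `k * ρ(W)`,
  and a nonempty `W` has a vertex of degree at most `k * (1 + ξ) * ρ(W)`, so the batch `L(W)` is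
  nonempty and the chain strictly decreases until it is empty (`batchL_nonempty`).
* In an optimal set `W*` every vertex has degree at least `ρ(W*)`, since deleting a vertex of
  smaller degree would increase the density (`OptimalTMDS.rhoW_le_degW`).

Let `W_j` be the last set of the chain containing `W*`. Some `v ∈ W*` lies in `L(W_j)`, and
degrees are monotone in the set, so `ρ(W*) ≤ deg_{W*} v ≤ deg_{W_j} v ≤ k * (1 + ξ) * ρ(W_j)`.
-/

open Finset MeasureTheory

open scoped Classical

variable {α ι : Type*} [DecidableEq α]

noncomputable def tauW (I : Finset ι) (vtx : ι → Finset α) (w : ι → ℝ) (W : Finset α) : ℝ :=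
  ∑ i ∈ I.filter (fun i => vtx i ⊆ W), w i

noncomputable def degW (I : Finset ι) (vtx : ι → Finset α) (w : ι → ℝ) (W : Finset α)
    (v : α) : ℝ :=
  ∑ i ∈ I.filter (fun i => vtx i ⊆ W ∧ v ∈ vtx i), w i

noncomputable def rhoW (I : Finset ι) (vtx : ι → Finset α) (w : ι → ℝ) (W : Finset α) : ℝ :=
  tauW I vtx w W / (W.card : ℝ)

def OptimalTMDS (I : Finset ι) (vtx : ι → Finset α) (w : ι → ℝ) (V Wstar : Finset α) : Prop :=
  Wstar ⊆ V ∧ Wstar.Nonempty ∧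
    ∀ W ⊆ V, W.Nonempty → rhoW I vtx w W ≤ rhoW I vtx w Wstar

noncomputable def batchL (k : ℕ) (ξ : ℝ) (I : Finset ι) (vtx : ι → Finset α) (w : ι → ℝ)
    (W : Finset α) : Finset α :=
  W.filter (fun v => degW I vtx w W v ≤ (k : ℝ) * (1 + ξ) * tauW I vtx w W / (W.card : ℝ))

lemma tauW_nonneg {I : Finset ι} {vtx : ι → Finset α} {w : ι → ℝ}
    (hw : ∀ i ∈ I, 0 ≤ w i) (W : Finset α) : 0 ≤ tauW I vtx w W :=
  Finset.sum_nonneg fun i hi => hw i (Finset.mem_filter.1 hi).1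

lemma degW_mono {I : Finset ι} {vtx : ι → Finset α} {w : ι → ℝ}
    (hw : ∀ i ∈ I, 0 ≤ w i) {W W' : Finset α} (h : W ⊆ W') (v : α) :
    degW I vtx w W v ≤ degW I vtx w W' v := by
  unfold degW
  refine Finset.sum_le_sum_of_subset_of_nonneg ?_ ?_
  · intro i hi
    rw [Finset.mem_filter] at hi ⊢
    exact ⟨hi.1, hi.2.1.trans h, hi.2.2⟩
  · intro i hi _
    exact hw i (Finset.mem_filter.1 hi).1

/-- Handshake identity: each instance inside `W` is counted once for each of its `k` vertices. -/
lemma sum_degW {k : ℕ} {I : Finset ι} {vtx : ι → Finset α} {w : ι → ℝ}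
    (hcard : ∀ i ∈ I, (vtx i).card = k) (W : Finset α) :
    ∑ v ∈ W, degW I vtx w W v = (k : ℝ) * tauW I vtx w W := by
  unfold degW tauW
  simp only [Finset.sum_filter, Finset.mul_sum]
  rw [Finset.sum_comm]
  refine Finset.sum_congr rfl fun i hi => ?_
  by_cases h : vtx i ⊆ W
  · simp only [h, true_and, if_true]
    rw [← Finset.sum_filter, Finset.filter_mem_eq_inter, Finset.inter_eq_right.2 h,
      Finset.sum_const, hcard i hi, nsmul_eq_mul]
  · simp [h]

/-- Deleting `v` destroys exactly the instances counted by its degree. -/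
lemma tauW_erase_add_degW (I : Finset ι) (vtx : ι → Finset α) (w : ι → ℝ) (W : Finset α) (v : α) :
    tauW I vtx w (W.erase v) + degW I vtx w W v = tauW I vtx w W := by
  unfold degW tauW
  simp only [Finset.sum_filter]
  rw [← Finset.sum_add_distrib]
  refine Finset.sum_congr rfl fun i _ => ?_
  by_cases h : vtx i ⊆ W <;> by_cases h' : v ∈ vtx i <;> simp [Finset.subset_erase, h, h']

lemma tauW_empty {k : ℕ} (hk : 2 ≤ k) {I : Finset ι} {vtx : ι → Finset α} {w : ι → ℝ}
    (hcard : ∀ i ∈ I, (vtx i).card = k) : tauW I vtx w ∅ = 0 := by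
  unfold tauW
  refine Finset.sum_eq_zero fun i hi => ?_
  obtain ⟨hi, h⟩ := Finset.mem_filter.1 hi
  have := hcard i hi
  rw [Finset.subset_empty.1 h, Finset.card_empty] at this
  omega

/-- Every vertex of an optimal set has degree at least the optimal density. -/
lemma OptimalTMDS.rhoW_le_degW {k : ℕ} (hk : 2 ≤ k) {I : Finset ι} {vtx : ι → Finset α}
    {w : ι → ℝ} (hcard : ∀ i ∈ I, (vtx i).card = k) {V W : Finset α}
    (hopt : OptimalTMDS I vtx w V W) {v : α} (hv : v ∈ W) :
    rhoW I vtx w W ≤ degW I vtx w W v := by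
  obtain ⟨hWV, hne, hmax⟩ := hopt
  have hpos : (0 : ℝ) < W.card := by exact_mod_cast hne.card_pos
  have hτ : tauW I vtx w W = rhoW I vtx w W * W.card := by
    unfold rhoW
    field_simp
  have hc : ((W.erase v).card : ℝ) + 1 = W.card := by
    exact_mod_cast Finset.card_erase_add_one hv
  have hle : tauW I vtx w (W.erase v) ≤ rhoW I vtx w W * (W.erase v).card := by
    rcases (W.erase v).eq_empty_or_nonempty with h | h
    · simp [h, tauW_empty hk hcard]
    · have := hmax _ ((Finset.erase_subset v W).trans hWV) h
      rwa [rhoW, div_le_iff₀ (by exact_mod_cast h.card_pos)] at this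
  have := tauW_erase_add_degW I vtx w W v
  rw [← hc] at hτ
  linarith

/-- Some vertex has at most the average degree `k * ρ(W)`, hence is peeled. -/
lemma batchL_nonempty {k : ℕ} {I : Finset ι} {vtx : ι → Finset α} {w : ι → ℝ}
    (hcard : ∀ i ∈ I, (vtx i).card = k) (hw : ∀ i ∈ I, 0 ≤ w i) {ξ : ℝ} (hξ : 0 < ξ)
    {W : Finset α} (hW : W.Nonempty) : (batchL k ξ I vtx w W).Nonempty := by
  have hpos : (0 : ℝ) < W.card := by exact_mod_cast hW.card_pos
  obtain ⟨v, hv, hle⟩ : ∃ v ∈ W,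
      degW I vtx w W v ≤ (k : ℝ) * (1 + ξ) * tauW I vtx w W / (W.card : ℝ) := by
    refine Finset.exists_le_of_sum_le hW ?_
    rw [sum_degW hcard, Finset.sum_const, nsmul_eq_mul, mul_div_cancel₀ _ hpos.ne']
    have : 0 ≤ (k : ℝ) * ξ * tauW I vtx w W := by
      have := tauW_nonneg (vtx := vtx) hw W
      positivity
    linarith
  exact ⟨v, Finset.mem_filter.2 ⟨hv, hle⟩⟩

/-- Batch peeling is a `1/(k(1+ξ))`-approximation: the chain
`W_1 = V`, `W_{i+1} = W_i ∖ L(W_i)` reaches the empty set, and for every optimal `W*`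
there is an index `i` with `W_i` nonempty and `ρ(W_i) ≥ ρ(W*)/(k(1+ξ))`. -/
theorem stmt7
    (k : ℕ) (hk : 2 ≤ k)
    (V : Finset α) (I : Finset ι) (vtx : ι → Finset α) (w : ι → ℝ)
    (hvtx : ∀ i ∈ I, vtx i ⊆ V) (hcard : ∀ i ∈ I, (vtx i).card = k)
    (hw : ∀ i ∈ I, 0 ≤ w i)
    (hV : V.Nonempty)
    (ξ : ℝ) (hξ : 0 < ξ)
    (Wc : ℕ → Finset α)
    (hW1 : Wc 1 = V)
    (hstep : ∀ i, 1 ≤ i → Wc (i + 1) = Wc i \ batchL k ξ I vtx w (Wc i))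
    (Wstar : Finset α) (hopt : OptimalTMDS I vtx w V Wstar) :
    (∃ i, 1 ≤ i ∧ Wc i = ∅) ∧
      ∃ i, 1 ≤ i ∧ (Wc i).Nonempty ∧
        rhoW I vtx w Wstar / ((k : ℝ) * (1 + ξ)) ≤ rhoW I vtx w (Wc i) := by
  have hlt : ∀ i, 1 ≤ i → (Wc i).Nonempty → (Wc (i + 1)).card < (Wc i).card := by
    intro i hi hne
    rw [hstep i hi]
    exact Finset.card_lt_card
      (Finset.sdiff_ssubset (Finset.filter_subset _ _) (batchL_nonempty hcard hw hξ hne))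
  have hend : ∃ i, 1 ≤ i ∧ Wc i = ∅ := by
    by_contra! hne
    have hbound : ∀ n, (Wc (n + 1)).card + n ≤ V.card := by
      intro n
      induction n with
      | zero => simp [hW1]
      | succ n ih =>
        have := hlt (n + 1) (by omega) (hne _ (by omega))
        omega
    have := hbound (V.card + 1)
    omega
  refine ⟨hend, ?_⟩
  obtain ⟨hsV, hsne, -⟩ := id hopt
  have hex : ∃ n, ¬ Wstar ⊆ Wc (n + 1) := by
    obtain ⟨i, hi, h⟩ := hend
    refine ⟨i - 1, ?_⟩
    rw [Nat.sub_add_cancel hi, h, Finset.subset_empty]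
    exact hsne.ne_empty
  -- `W_{j+1}` is the last set of the chain that contains `W*`.
  obtain ⟨j, hj, hj'⟩ : ∃ j, Wstar ⊆ Wc (j + 1) ∧ ¬ Wstar ⊆ Wc (j + 1 + 1) := by
    by_contra! hall
    obtain ⟨n, hn⟩ := hex
    refine hn ?_
    clear hn
    induction n with
    | zero => simpa [hW1] using hsV
    | succ n ih => exact hall n ih
  obtain ⟨v, hv, hvn⟩ := Finset.not_subset.1 hj'
  have hvL : v ∈ batchL k ξ I vtx w (Wc (j + 1)) := by
    by_contra h
    rw [hstep _ (by omega)] at hvn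
    exact hvn (Finset.mem_sdiff.2 ⟨hj hv, h⟩)
  refine ⟨j + 1, by omega, hsne.mono hj, ?_⟩
  have hk0 : (0 : ℝ) < k := by exact_mod_cast (by omega : 0 < k)
  rw [div_le_iff₀ (by positivity)]
  calc rhoW I vtx w Wstar ≤ degW I vtx w Wstar v := hopt.rhoW_le_degW hk hcard hv
    _ ≤ degW I vtx w (Wc (j + 1)) v := degW_mono hw hj v
    _ ≤ (k : ℝ) * (1 + ξ) * tauW I vtx w (Wc (j + 1)) / ((Wc (j + 1)).card : ℝ) :=
      (Finset.mem_filter.1 hvL).2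
    _ = rhoW I vtx w (Wc (j + 1)) * ((k : ℝ) * (1 + ξ)) := by
      unfold rhoW
      ring
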